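/- For every integer n ≥ 3, Σ_{ω ∈ R(w_0^B)} yb(ω) = 2(n² − 2) · Σ_{k=1}^{n−2} |R(w_k)|, where yb(ω) denotes the number of Yang–Baxter moves in ω. -/

import Mathlib

/-- The generator `sᵢ` of the hyperoctahedral group `Bₙ`, realized as a permutation of `ℤ`:
`s₀` swaps `1` and `-1`; for `i ≥ 1`, `sᵢ` swaps `i` with `i+1` and `-i` with `-(i+1)`,
fixing all other integers. -/
def sB (i : ℕ) : Equiv.Perm ℤ :=
  if i = 0 then Equiv.swap 1 (-1)
  else Equiv.swap (i : ℤ) ((i : ℤ) + 1) * Equiv.swap (-(i : ℤ)) (-((i : ℤ) + 1))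

/-- The product `s_{i₁} ⋯ s_{i_ℓ}` corresponding to the word `i₁ ⋯ i_ℓ`. -/
def wordProd (l : List ℕ) : Equiv.Perm ℤ := (l.map sB).prod

/-- The underlying function of the longest element `w₀ᴮ ∈ Bₙ`: `i ↦ -i` on `{-n, …, n}`,
fixing all other integers. -/
def w0BFun (n : ℕ) : ℤ → ℤ := fun i => if -(n : ℤ) ≤ i ∧ i ≤ (n : ℤ) then -i else i

lemma w0BFun_involutive (n : ℕ) : Function.Involutive (w0BFun n) := by
  intro i
  unfold w0BFun
  split_ifs <;> omega

/-- The longest element `w₀ᴮ ∈ Bₙ`, as a permutation of `ℤ`. -/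
def w0B (n : ℕ) : Equiv.Perm ℤ := (w0BFun_involutive n).toPerm

/-- `l` is a reduced decomposition of `w` in `Bₙ`: a word over the alphabet `{0, …, n-1}`
whose product of generators is `w`, of minimal length among all such words. -/
def IsReducedWord (n : ℕ) (w : Equiv.Perm ℤ) (l : List ℕ) : Prop :=
  (∀ i ∈ l, i < n) ∧ wordProd l = w ∧
    ∀ l' : List ℕ, (∀ i ∈ l', i < n) → wordProd l' = w → l.length ≤ l'.length

/-- `R(w)`, the set of reduced decompositions of `w` in `Bₙ`. -/
def RSet (n : ℕ) (w : Equiv.Perm ℤ) : Set (List ℕ) := {l | IsReducedWord n w l}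

/-- The length `ℓ(w)` of `w ∈ Bₙ`: the minimal length of a word over `{0, …, n-1}`
whose product of generators is `w`. -/
noncomputable def lenB (n : ℕ) (w : Equiv.Perm ℤ) : ℕ :=
  sInf {m : ℕ | ∃ l : List ℕ, (∀ i ∈ l, i < n) ∧ wordProd l = w ∧ l.length = m}

/-- Whether a word begins with `k (k+1) k` or `(k+1) k (k+1)` for some `k ≥ 1`. -/
def isYB : List ℕ → Bool
  | a :: b :: c :: _ => (a != 0 && b == a + 1 && c == a) || (b != 0 && a == b + 1 && c == b + 1)
  | _ => false

/-- The number of Yang–Baxter moves in a word. -/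
def ybCount (l : List ℕ) : ℕ :=
  ((Finset.range l.length).filter fun j => isYB (l.drop j) = true).card

/-- Whether a word begins with `0101` or `1010`. -/
def is01 : List ℕ → Bool
  | a :: b :: c :: d :: _ =>
      (a == 0 && b == 1 && c == 0 && d == 1) || (a == 1 && b == 0 && c == 1 && d == 0)
  | _ => false

/-- The number of 01 moves in a word. -/
def m01Count (l : List ℕ) : ℕ :=
  ((Finset.range l.length).filter fun j => is01 (l.drop j) = true).card

/-- The underlying function of `w_k ∈ Bₙ`: `k ↦ -(k+2)`, `k+2 ↦ -k`, and `i ↦ -i` for all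
other `i ∈ {1, …, n}`, extended by `w(-i) = -w(i)` and fixing all integers outside
`{-n, …, -1, 1, …, n}`. -/
def wkFun (n k : ℕ) : ℤ → ℤ := fun i =>
  if -(n : ℤ) ≤ i ∧ i ≤ (n : ℤ) then
    if i = (k : ℤ) then -((k : ℤ) + 2)
    else if i = (k : ℤ) + 2 then -(k : ℤ)
    else if i = -(k : ℤ) then (k : ℤ) + 2
    else if i = -((k : ℤ) + 2) then (k : ℤ)
    else -i
  else i

/-- The underlying function of `w' ∈ Bₙ`: `1 ↦ 1`, `2 ↦ 2`, and `i ↦ -i` for `3 ≤ i ≤ n`,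
extended by `w(-i) = -w(i)` and fixing all integers outside `{-n, …, -1, 1, …, n}`. -/
def wpFun (n : ℕ) : ℤ → ℤ := fun i =>
  if (-(n : ℤ) ≤ i ∧ i ≤ (n : ℤ)) ∧ (i < -2 ∨ 2 < i) then -i else i

/-- `w`, viewed as a signed permutation of `{1, …, n}` via the values `w(1), …, w(n)`,
contains the signed pattern `p` (given by its list of values `p(1), …, p(m)`). -/
def ContainsPattern (n : ℕ) (w : ℤ → ℤ) (p : List ℤ) : Prop :=
  ∃ j : Fin p.length → ℤ, StrictMono j ∧ (∀ r, 1 ≤ j r ∧ j r ≤ (n : ℤ)) ∧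
    (∀ r s, w (j r) < w (j s) ↔ p.get r < p.get s) ∧
    (∀ r, w (j r) < 0 ↔ p.get r < 0)

/-- Evaluation of `s₀`. -/
lemma sB_zero_apply (i : ℤ) : sB 0 i = if i = 1 then -1 else if i = -1 then 1 else i := by
  simp [sB, Equiv.swap_apply_def]

/-- Evaluation of `sₐ` for `a ≥ 1`. -/
lemma sB_pos_apply (a : ℕ) (ha : 1 ≤ a) (i : ℤ) : sB a i =
    if i = (a : ℤ) then (a : ℤ) + 1 else if i = (a : ℤ) + 1 then (a : ℤ)
    else if i = -(a : ℤ) then -((a : ℤ) + 1) else if i = -((a : ℤ) + 1) then -(a : ℤ) else i := by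
  have h : a ≠ 0 := by omega
  simp only [sB, h, if_false, Equiv.swap_apply_def, Equiv.Perm.mul_apply]
  split_ifs <;> omega

/-- Signed permutations of `{-n, …, n}`. -/
def SgnPerm (n : ℕ) (w : Equiv.Perm ℤ) : Prop :=
  (∀ i, w (-i) = -w i) ∧ ∀ i : ℤ, (i < -(n : ℤ) ∨ (n : ℤ) < i) → w i = i

lemma SgnPerm.one (n : ℕ) : SgnPerm n 1 := ⟨fun _ => rfl, fun _ _ => rfl⟩

lemma SgnPerm.mul {n : ℕ} {u v : Equiv.Perm ℤ} (hu : SgnPerm n u) (hv : SgnPerm n v) :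
    SgnPerm n (u * v) := by
  refine ⟨fun i => ?_, fun i hi => ?_⟩
  · simp [hu.1, hv.1]
  · simp [hv.2 i hi, hu.2 i hi]

lemma sgnPerm_sB {n a : ℕ} (ha : a < n) : SgnPerm n (sB a) := by
  rcases Nat.eq_zero_or_pos a with rfl | h
  · refine ⟨fun i => ?_, fun i hi => ?_⟩
    · simp only [sB_zero_apply]; split_ifs <;> omega
    · simp only [sB_zero_apply]; split_ifs <;> omega
  · refine ⟨fun i => ?_, fun i hi => ?_⟩
    · simp only [sB_pos_apply a h]; split_ifs <;> omega
    · simp only [sB_pos_apply a h]; split_ifs <;> omega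

lemma wordProd_cons (a : ℕ) (l : List ℕ) : wordProd (a :: l) = sB a * wordProd l := by
  simp [wordProd]

lemma wordProd_append (l l' : List ℕ) : wordProd (l ++ l') = wordProd l * wordProd l' := by
  simp [wordProd]

lemma sgnPerm_wordProd {n : ℕ} {l : List ℕ} (h : ∀ i ∈ l, i < n) : SgnPerm n (wordProd l) := by
  induction l with
  | nil => exact SgnPerm.one n
  | cons a l ih =>
    rw [wordProd_cons]
    exact (sgnPerm_sB (h a (by simp))).mul (ih fun i hi => h i (by simp [hi]))

lemma SgnPerm.range {n : ℕ} {w : Equiv.Perm ℤ} (hw : SgnPerm n w) {i : ℤ}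
    (h1 : -(n : ℤ) ≤ i) (h2 : i ≤ n) : -(n : ℤ) ≤ w i ∧ w i ≤ n := by
  by_contra hc
  have h := hw.2 (w i) (by omega)
  have := w.injective h
  omega

lemma SgnPerm.zero {n : ℕ} {w : Equiv.Perm ℤ} (hw : SgnPerm n w) : w 0 = 0 := by
  have := hw.1 0
  simp at this
  omega

lemma w0B_apply (n : ℕ) (i : ℤ) :
    w0B n i = if -(n : ℤ) ≤ i ∧ i ≤ (n : ℤ) then -i else i := rfl

lemma sgnPerm_w0B (n : ℕ) : SgnPerm n (w0B n) := by
  refine ⟨fun i => ?_, fun i hi => ?_⟩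
  · simp only [w0B_apply]; split_ifs <;> omega
  · simp only [w0B_apply]; split_ifs <;> omega

/-- The longest element is central. -/
lemma w0B_comm {n : ℕ} {w : Equiv.Perm ℤ} (hw : SgnPerm n w) : w * w0B n = w0B n * w := by
  ext i
  simp only [Equiv.Perm.mul_apply, w0B_apply]
  by_cases h : -(n : ℤ) ≤ i ∧ i ≤ (n : ℤ)
  · rw [if_pos h, if_pos (hw.range h.1 h.2), hw.1]
  · have := hw.2 i (by omega)
    rw [if_neg h, this, if_neg h]

lemma sB_zero_spec (i : ℤ) : (i = 1 ∧ sB 0 i = -1) ∨ (i = -1 ∧ sB 0 i = 1) ∨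
    (i ≠ 1 ∧ i ≠ -1 ∧ sB 0 i = i) := by
  rw [sB_zero_apply]
  split_ifs <;> omega

lemma sB_pos_spec (a : ℕ) (ha : 1 ≤ a) (i : ℤ) : (i = a ∧ sB a i = a + 1) ∨
    (i = a + 1 ∧ sB a i = a) ∨ (i = -a ∧ sB a i = -(a + 1)) ∨ (i = -(a + 1) ∧ sB a i = -a) ∨
    (i ≠ a ∧ i ≠ a + 1 ∧ i ≠ -a ∧ i ≠ -(a + 1) ∧ sB a i = i) := by
  rw [sB_pos_apply a ha]
  split_ifs <;> omega

lemma sB_mul_self (a : ℕ) : sB a * sB a = 1 := by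
  apply Equiv.ext
  intro i
  rw [Equiv.Perm.mul_apply, Equiv.Perm.one_apply]
  rcases Nat.eq_zero_or_pos a with rfl | h
  · have h1 := sB_zero_spec i
    have h2 := sB_zero_spec (sB 0 i)
    omega
  · have h1 := sB_pos_spec a h i
    have h2 := sB_pos_spec a h (sB a i)
    omega

/-- The reflection exchanging `k` and `k + 2`. -/
def tFun (k : ℕ) (i : ℤ) : ℤ :=
  if i = k then k + 2 else if i = k + 2 then k
    else if i = -k then -(k + 2) else if i = -(k + 2) then -k else i

lemma triple_a {k : ℕ} (hk : 1 ≤ k) (i : ℤ) : sB k (sB (k + 1) (sB k i)) = tFun k i := by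
  have h1 := sB_pos_spec k hk i
  generalize sB k i = x at *
  have h2 := sB_pos_spec (k + 1) (by omega) x
  generalize sB (k + 1) x = y at *
  have h3 := sB_pos_spec k hk y
  generalize sB k y = z at *
  push_cast at h2
  unfold tFun
  rcases h1 with h1 | h1 | h1 | h1 | h1 <;> rcases h2 with h2 | h2 | h2 | h2 | h2 <;> omega

lemma triple_b {k : ℕ} (hk : 1 ≤ k) (i : ℤ) : sB (k + 1) (sB k (sB (k + 1) i)) = tFun k i := by
  have h1 := sB_pos_spec (k + 1) (by omega) i
  generalize sB (k + 1) i = x at *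
  have h2 := sB_pos_spec k hk x
  generalize sB k x = y at *
  have h3 := sB_pos_spec (k + 1) (by omega) y
  generalize sB (k + 1) y = z at *
  push_cast at h1 h3
  unfold tFun
  rcases h1 with h1 | h1 | h1 | h1 | h1 <;> rcases h2 with h2 | h2 | h2 | h2 | h2 <;> omega

/-- The pairs indexing the reflections (positive roots) of `Bₙ`. -/
noncomputable def posPairs (n : ℕ) : Finset (ℤ × ℤ) :=
  (Finset.Icc (-(n : ℤ)) n ×ˢ Finset.Icc 1 (n : ℤ)).filter
    fun p => -p.2 ≤ p.1 ∧ p.1 < p.2 ∧ p.1 ≠ 0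

/-- Inversions of `w`. -/
noncomputable def invSet (n : ℕ) (w : Equiv.Perm ℤ) : Finset (ℤ × ℤ) :=
  (posPairs n).filter fun p => w p.2 < w p.1

lemma mem_posPairs (n : ℕ) (i j : ℤ) :
    (i, j) ∈ posPairs n ↔ 1 ≤ j ∧ j ≤ n ∧ -j ≤ i ∧ i < j ∧ i ≠ 0 := by
  simp only [posPairs, Finset.mem_filter, Finset.mem_product, Finset.mem_Icc]
  omega

lemma mem_invSet (n : ℕ) (w : Equiv.Perm ℤ) (i j : ℤ) :
    (i, j) ∈ invSet n w ↔ (1 ≤ j ∧ j ≤ n ∧ -j ≤ i ∧ i < j ∧ i ≠ 0) ∧ w j < w i := by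
  simp only [invSet, Finset.mem_filter, mem_posPairs]

lemma card_posPairs (n : ℕ) : (posPairs n).card = n ^ 2 := by
  induction n with
  | zero =>
    rw [Finset.card_eq_zero.2]; · rfl
    ext ⟨i, j⟩
    simp only [mem_posPairs, Finset.notMem_empty, iff_false]
    push_cast
    omega
  | succ n ih =>
    have h : posPairs (n + 1) = posPairs n ∪
        ((Finset.Icc (-((n : ℤ) + 1)) n).erase 0).image (fun i => (i, (n : ℤ) + 1)) := by
      ext ⟨i, j⟩
      simp only [mem_posPairs, Finset.mem_union, Finset.mem_image, Finset.mem_erase,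
        Finset.mem_Icc, Prod.mk.injEq]
      constructor
      · intro h
        by_cases hj : j = n + 1
        · right; refine ⟨i, ?_, rfl, hj.symm⟩; omega
        · left; omega
      · rintro (h | ⟨x, h, rfl, rfl⟩) <;> omega
    rw [h, Finset.card_union_of_disjoint, ih, Finset.card_image_of_injective,
      Finset.card_erase_of_mem, Int.card_Icc]
    · have : ((n : ℤ) + 1 - -((n : ℤ) + 1)).toNat = 2 * n + 2 := by omega
      rw [this]
      have : (n + 1) ^ 2 = n ^ 2 + 2 * n + 1 := by ring
      omega
    · simp only [Finset.mem_Icc]; omega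
    · intro x y hxy; simpa using hxy
    · rw [Finset.disjoint_left]
      rintro ⟨i, j⟩ h1 h2
      rw [mem_posPairs] at h1
      simp only [Finset.mem_image, Finset.mem_erase,
        Finset.mem_Icc, Prod.mk.injEq] at h2
      obtain ⟨x, _, _, rfl⟩ := h2
      omega

lemma inv_step_zero {n : ℕ} (hn : 0 < n) {w : Equiv.Perm ℤ}
    (hd : w (-1) < w 1) : (invSet n (w * sB 0)).card = (invSet n w).card + 1 := by
  have hmem : ((-1 : ℤ), (1 : ℤ)) ∈ invSet n (w * sB 0) := by
    rw [mem_invSet]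
    refine ⟨by omega, ?_⟩
    simpa [sB_zero_apply] using hd
  rw [← Finset.card_erase_add_one hmem]
  congr 1
  have key : ∀ i j : ℤ, (1 ≤ j ∧ j ≤ n ∧ -j ≤ i ∧ i < j ∧ i ≠ 0) → (i, j) ≠ (-1, 1) →
      (1 ≤ sB 0 j ∧ sB 0 j ≤ n ∧ -sB 0 j ≤ sB 0 i ∧ sB 0 i < sB 0 j ∧ sB 0 i ≠ 0) ∧
      (sB 0 i, sB 0 j) ≠ (-1, 1) := by
    intro i j h h'
    simp only [ne_eq, Prod.mk.injEq] at h' ⊢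
    have h1 := sB_zero_spec i
    have h2 := sB_zero_spec j
    omega
  have hss : ∀ i, sB 0 (sB 0 i) = i := fun i => by
    rw [← Equiv.Perm.mul_apply, sB_mul_self]; rfl
  refine Finset.card_nbij' (fun p => (sB 0 p.1, sB 0 p.2)) (fun p => (sB 0 p.1, sB 0 p.2))
    ?_ ?_ ?_ ?_
  · rintro ⟨i, j⟩ h
    simp only [Finset.coe_erase, Set.mem_sdiff, Finset.mem_coe, mem_invSet,
      Set.mem_singleton_iff, Equiv.Perm.mul_apply] at h ⊢
    exact ⟨(key i j h.1.1 h.2).1, h.1.2⟩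
  · rintro ⟨i, j⟩ h
    simp only [Finset.coe_erase, Set.mem_sdiff, Finset.mem_coe, mem_invSet,
      Set.mem_singleton_iff, Equiv.Perm.mul_apply, hss] at h ⊢
    have hne : (i, j) ≠ (-1, 1) := by
      rintro h'
      simp only [Prod.mk.injEq] at h'
      rw [h'.1, h'.2] at h
      omega
    exact ⟨⟨(key i j h.1 hne).1, h.2⟩, (key i j h.1 hne).2⟩
  · rintro ⟨i, j⟩ _; simp [hss]
  · rintro ⟨i, j⟩ _; simp [hss]

lemma inv_step_pos {n a : ℕ} (ha : 1 ≤ a) (han : a < n) {w : Equiv.Perm ℤ} (hw : SgnPerm n w)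
    (hd : w a < w (a + 1)) : (invSet n (w * sB a)).card = (invSet n w).card + 1 := by
  have hmem : ((a : ℤ), (a : ℤ) + 1) ∈ invSet n (w * sB a) := by
    rw [mem_invSet]
    refine ⟨by omega, ?_⟩
    simpa [sB_pos_apply a ha] using hd
  rw [← Finset.card_erase_add_one hmem]
  congr 1
  have key : ∀ i j : ℤ, (1 ≤ j ∧ j ≤ n ∧ -j ≤ i ∧ i < j ∧ i ≠ 0) → (i, j) ≠ ((a : ℤ), (a : ℤ) + 1) →
      (i, j) ≠ (-(a : ℤ), (a : ℤ) + 1) →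
      (1 ≤ sB a j ∧ sB a j ≤ n ∧ -sB a j ≤ sB a i ∧ sB a i < sB a j ∧ sB a i ≠ 0) ∧
      (sB a i, sB a j) ≠ ((a : ℤ), (a : ℤ) + 1) ∧ (sB a i, sB a j) ≠ (-(a : ℤ), (a : ℤ) + 1) := by
    intro i j h h' h''
    simp only [ne_eq, Prod.mk.injEq] at h' h'' ⊢
    have h1 := sB_pos_spec a ha i
    have h2 := sB_pos_spec a ha j
    rcases h1 with h1 | h1 | h1 | h1 | h1 <;> rcases h2 with h2 | h2 | h2 | h2 | h2 <;> omega
  have hss : ∀ i, sB a (sB a i) = i := fun i => by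
    rw [← Equiv.Perm.mul_apply, sB_mul_self]; rfl
  have e1 : sB a (-(a : ℤ)) = -((a : ℤ) + 1) := by
    simp only [sB_pos_apply a ha]; split_ifs <;> omega
  have e2 : sB a ((a : ℤ) + 1) = (a : ℤ) := by
    simp only [sB_pos_apply a ha]; split_ifs <;> omega
  let σ : ℤ × ℤ → ℤ × ℤ := fun p =>
    if p = (-(a : ℤ), (a : ℤ) + 1) then p else (sB a p.1, sB a p.2)
  have hσ : ∀ p, p ≠ (-(a : ℤ), (a : ℤ) + 1) → σ p = (sB a p.1, sB a p.2) := fun p h => if_neg h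
  have hσ' : σ (-(a : ℤ), (a : ℤ) + 1) = (-(a : ℤ), (a : ℤ) + 1) := if_pos rfl
  have A : ∀ p ∈ (invSet n (w * sB a)).erase ((a : ℤ), (a : ℤ) + 1), σ p ∈ invSet n w ∧ σ (σ p) = p := by
    rintro ⟨i, j⟩ h
    by_cases hp : (i, j) = (-(a : ℤ), (a : ℤ) + 1)
    · rw [hp] at h ⊢
      rw [hσ', hσ']
      simp only [Finset.mem_erase, mem_invSet, Equiv.Perm.mul_apply, e1, e2, hw.1] at h ⊢
      exact ⟨⟨h.2.1, by omega⟩, trivial⟩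
    · simp only [Finset.mem_erase, mem_invSet, Equiv.Perm.mul_apply] at h
      obtain ⟨k1, k2, k3⟩ := key i j h.2.1 h.1 hp
      rw [hσ _ hp, hσ _ k3]
      simp only [mem_invSet, hss]
      exact ⟨⟨k1, h.2.2⟩, trivial⟩
  have B : ∀ p ∈ invSet n w, σ p ∈ (invSet n (w * sB a)).erase ((a : ℤ), (a : ℤ) + 1) ∧ σ (σ p) = p := by
    rintro ⟨i, j⟩ h
    by_cases hp : (i, j) = (-(a : ℤ), (a : ℤ) + 1)
    · rw [hp] at h ⊢
      rw [hσ', hσ']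
      simp only [Finset.mem_erase, mem_invSet, Equiv.Perm.mul_apply, e1, e2, hw.1] at h ⊢
      refine ⟨⟨?_, h.1, by omega⟩, trivial⟩
      simp only [ne_eq, Prod.mk.injEq]
      omega
    · have hne : (i, j) ≠ ((a : ℤ), (a : ℤ) + 1) := by
        rintro h'
        simp only [Prod.mk.injEq] at h'
        rw [h'.1, h'.2, mem_invSet] at h
        omega
      simp only [mem_invSet] at h
      obtain ⟨k1, k2, k3⟩ := key i j h.1 hne hp
      rw [hσ _ hp, hσ _ k3]
      simp only [Finset.mem_erase, mem_invSet, Equiv.Perm.mul_apply, hss]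
      exact ⟨⟨k2, k1, h.2⟩, trivial⟩
  exact Finset.card_nbij' σ σ (fun p hp => (A p hp).1) (fun p hp => (B p hp).1)
    (fun p hp => (A p hp).2) (fun p hp => (B p hp).2)

/-- The left end of the simple pair. -/
def lo (a : ℕ) : ℤ := if a = 0 then -1 else a

lemma inv_up {n a : ℕ} (han : a < n) {w : Equiv.Perm ℤ} (hw : SgnPerm n w)
    (hd : w (lo a) < w (a + 1)) : (invSet n (w * sB a)).card = (invSet n w).card + 1 := by
  rcases Nat.eq_zero_or_pos a with rfl | h
  · exact inv_step_zero han (by simpa [lo] using hd)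
  · exact inv_step_pos h han hw (by simpa [lo, h.ne'] using hd)

lemma sB_lo (a : ℕ) : sB a (lo a) = a + 1 := by
  rcases Nat.eq_zero_or_pos a with rfl | h
  · simp [lo, sB_zero_apply]
  · simp [lo, sB_pos_apply a h, h.ne']

lemma sB_hi (a : ℕ) : sB a (a + 1) = lo a := by
  rw [← sB_lo, ← Equiv.Perm.mul_apply, sB_mul_self]; rfl

lemma inv_down {n a : ℕ} (han : a < n) {w : Equiv.Perm ℤ} (hw : SgnPerm n w)
    (hd : w (a + 1) < w (lo a)) : (invSet n (w * sB a)).card + 1 = (invSet n w).card := by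
  have := inv_up (w := w * sB a) han (hw.mul (sgnPerm_sB han)) (by
    simpa only [Equiv.Perm.mul_apply, sB_lo, sB_hi] using hd)
  rw [mul_assoc, sB_mul_self, mul_one] at this
  exact this.symm

lemma lo_ne (a : ℕ) : lo a ≠ a + 1 := by
  unfold lo; split_ifs <;> omega

lemma invSet_one (n : ℕ) : (invSet n 1).card = 0 := by
  rw [Finset.card_eq_zero]
  ext ⟨i, j⟩
  simp only [mem_invSet, Equiv.Perm.one_apply, Finset.notMem_empty, iff_false]
  omega

lemma inv_le_length {n : ℕ} (l : List ℕ) (h : ∀ i ∈ l, i < n) :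
    (invSet n (wordProd l)).card ≤ l.length := by
  induction l using List.reverseRecOn with
  | nil => simpa [wordProd] using (invSet_one n).le
  | append_singleton l a ih =>
    have hl : ∀ i ∈ l, i < n := fun i hi => h i (by simp [hi])
    have ha : a < n := h a (by simp)
    have ih := ih hl
    have e : wordProd (l ++ [a]) = wordProd l * sB a := by simp [wordProd]
    rw [e, List.length_append, List.length_singleton]
    have hs := sgnPerm_wordProd hl
    rcases lt_trichotomy (wordProd l (lo a)) (wordProd l (a + 1)) with h1 | h1 | h1
    · rw [inv_up ha hs h1]; omega
    · exact absurd ((wordProd l).injective h1) (lo_ne a)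
    · have := inv_down ha hs h1; omega

lemma eq_one_of_no_descent {n : ℕ} {w : Equiv.Perm ℤ} (hw : SgnPerm n w)
    (h : ∀ a : ℕ, a < n → w (lo a) < w (a + 1)) : w = 1 := by
  have h0 := hw.zero
  have hstep : ∀ a : ℕ, a < n → w a < w (a + 1) := by
    intro a ha
    rcases Nat.eq_zero_or_pos a with rfl | h'
    · have := h 0 ha
      simp only [lo, if_true, hw.1] at this
      simp only [Nat.cast_zero, zero_add, h0] at this ⊢
      omega
    · simpa [lo, h'.ne'] using h a ha
  have hge : ∀ a : ℕ, a ≤ n → (a : ℤ) ≤ w a := by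
    intro a
    induction a with
    | zero => intro _; simp [h0]
    | succ a ih =>
      intro ha
      have := hstep a (by omega)
      have := ih (by omega)
      push_cast
      omega
  have hle : ∀ d : ℕ, ∀ a : ℕ, a + d = n → w a ≤ a := by
    intro d
    induction d with
    | zero =>
      intro a ha
      have : a = n := by omega
      subst this
      exact (hw.range (by omega) (by omega)).2
    | succ d ih =>
      intro a ha
      have h1 := ih (a + 1) (by omega)
      have h2 := hstep a (by omega)
      push_cast at h1
      omega
  have heq : ∀ a : ℕ, w a = a := by
    intro a
    by_cases ha : a ≤ n
    · exact le_antisymm (hle (n - a) a (by omega)) (hge a ha)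
    · exact hw.2 a (by omega)
  ext i
  rcases Int.eq_nat_or_neg i with ⟨a, rfl | rfl⟩
  · simp [heq]
  · simp [hw.1, heq]

lemma exists_word {n : ℕ} (m : ℕ) : ∀ w : Equiv.Perm ℤ, SgnPerm n w → (invSet n w).card = m →
    ∃ l : List ℕ, (∀ i ∈ l, i < n) ∧ wordProd l = w ∧ l.length = m := by
  induction m with
  | zero =>
    intro w hw hm
    refine ⟨[], by simp, ?_, rfl⟩
    rw [eq_one_of_no_descent hw]; · simp [wordProd]
    intro a ha
    rcases lt_trichotomy (w (lo a)) (w (a + 1)) with h1 | h1 | h1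
    · exact h1
    · exact absurd (w.injective h1) (lo_ne a)
    · have := inv_down ha hw h1; omega
  | succ m ih =>
    intro w hw hm
    have : ∃ a < n, w (a + 1) < w (lo a) := by
      by_contra hc
      push Not at hc
      have : w = 1 := eq_one_of_no_descent hw fun a ha =>
        lt_of_le_of_ne (hc a ha) fun h => lo_ne a (w.injective h)
      rw [this, invSet_one] at hm
      omega
    obtain ⟨a, ha, hd⟩ := this
    obtain ⟨l, h1, h2, h3⟩ := ih (w * sB a) (hw.mul (sgnPerm_sB ha))
      (by have := inv_down ha hw hd; omega)
    refine ⟨l ++ [a], ?_, ?_, by simp [h3]⟩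
    · intro i hi
      simp only [List.mem_append, List.mem_singleton] at hi
      rcases hi with hi | rfl
      · exact h1 i hi
      · exact ha
    · rw [wordProd_append, h2]
      simp [wordProd, mul_assoc, sB_mul_self]

lemma mem_RSet {n : ℕ} {w : Equiv.Perm ℤ} (hw : SgnPerm n w) (l : List ℕ) :
    l ∈ RSet n w ↔ (∀ i ∈ l, i < n) ∧ wordProd l = w ∧ l.length = (invSet n w).card := by
  constructor
  · rintro ⟨h1, h2, h3⟩
    obtain ⟨l', k1, k2, k3⟩ := exists_word _ w hw rfl
    refine ⟨h1, h2, le_antisymm (k3 ▸ h3 l' k1 k2) ?_⟩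
    have := inv_le_length l h1
    rwa [h2] at this
  · rintro ⟨h1, h2, h3⟩
    refine ⟨h1, h2, fun l' k1 k2 => ?_⟩
    have := inv_le_length l' k1
    rw [k2] at this
    omega

lemma inv_w0B (n : ℕ) : (invSet n (w0B n)).card = n ^ 2 := by
  rw [← card_posPairs]
  congr 1
  refine Finset.filter_true_of_mem ?_
  rintro ⟨i, j⟩ h
  rw [mem_posPairs] at h
  simp only [w0B_apply]
  split_ifs <;> omega

lemma RSet_finite {n : ℕ} {w : Equiv.Perm ℤ} (hw : SgnPerm n w) : (RSet n w).Finite := by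
  refine ((List.finite_length_eq (Fin n) (invSet n w).card).image (List.map Fin.val)).subset ?_
  intro l hl
  rw [mem_RSet hw] at hl
  refine ⟨l.pmap (fun a h => ⟨a, h⟩) hl.1, by simpa using hl.2.2, ?_⟩
  simp [List.map_pmap]

lemma Wk_eq {n k : ℕ} (hk : 1 ≤ k) (hkn : k + 2 ≤ n) {w : Equiv.Perm ℤ}
    (h : ∀ i : ℤ, w i = wkFun n k i) : w = w0B n * sB k * sB (k + 1) * sB k := by
  apply Equiv.ext
  intro i
  rw [h]
  simp only [Equiv.Perm.mul_apply]
  rw [triple_a hk, w0B_apply]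
  unfold wkFun tFun
  split_ifs <;> omega

lemma braid {k : ℕ} (hk : 1 ≤ k) : sB k * sB (k + 1) * sB k = sB (k + 1) * sB k * sB (k + 1) := by
  apply Equiv.ext
  intro i
  simp only [Equiv.Perm.mul_apply]
  rw [triple_a hk, triple_b hk]

lemma inv_Wk {n k : ℕ} (hk : 1 ≤ k) (hkn : k + 2 ≤ n) :
    (invSet n (w0B n * sB k * sB (k + 1) * sB k)).card + 3 = n ^ 2 := by
  have s0 := sgnPerm_w0B n
  have s1 : SgnPerm n (sB k) := sgnPerm_sB (by omega)
  have s2 : SgnPerm n (sB (k + 1)) := sgnPerm_sB (by omega)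
  have h1 : 1 ≤ k + 1 := by omega
  have l1 : lo k = k := by unfold lo; split_ifs <;> omega
  have l2 : lo (k + 1) = k + 1 := by simp [lo]
  have a1 : sB k (k : ℤ) = k + 1 := by have := sB_pos_spec k hk k; omega
  have a2 : sB k ((k : ℤ) + 1) = k := by have := sB_pos_spec k hk (k + 1); omega
  have a3 : sB k ((k : ℤ) + 1 + 1) = k + 2 := by have := sB_pos_spec k hk (k + 1 + 1); omega
  have b1 : sB (k + 1) (k : ℤ) = k := by have := sB_pos_spec (k + 1) h1 k; omega
  have b2 : sB (k + 1) ((k : ℤ) + 1) = k + 1 + 1 := by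
    have := sB_pos_spec (k + 1) h1 (k + 1); omega
  have c : ∀ i : ℤ, 0 ≤ i → i ≤ n → w0B n i = -i := by
    intro i hi hi'
    rw [w0B_apply, if_pos (by omega)]
  have i1 := inv_down (a := k) (by omega) s0 (by
    rw [l1, c _ (by omega) (by omega), c _ (by omega) (by omega)]; omega)
  have i2 := inv_down (a := k + 1) (by omega) (s0.mul s1) (by
    simp only [Equiv.Perm.mul_apply]
    push_cast
    rw [l2, a3, a2, c _ (by omega) (by omega), c _ (by omega) (by omega)]; omega)
  have i3 := inv_down (a := k) (by omega) ((s0.mul s1).mul s2) (by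
    simp only [Equiv.Perm.mul_apply]
    rw [l1, b1, b2, a1, a3, c _ (by omega) (by omega), c _ (by omega) (by omega)]; omega)
  rw [inv_w0B] at i1
  omega

lemma isYB_short (l : List ℕ) (h : l.length < 3) : isYB l = false := by
  match l, h with
  | [], _ => rfl
  | [_], _ => rfl
  | [_, _], _ => rfl
  | _ :: _ :: _ :: _, h => simp at h; omega

lemma isYB_append (u v : List ℕ) (h : 3 ≤ u.length) : isYB (u ++ v) = isYB u := by
  match u, h with
  | [], h => simp at h
  | [_], h => simp at h
  | [_, _], h => simp at h
  | _ :: _ :: _ :: _, _ => rfl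

lemma isYB_rotate (l : List ℕ) (j : ℕ) (h : j + 3 ≤ l.length) :
    isYB (l.rotate j) = isYB (l.drop j) := by
  rw [List.rotate_eq_drop_append_take (by omega), isYB_append]
  rw [List.length_drop]; omega

lemma isYB_iff (l : List ℕ) : isYB l = true ↔ ∃ k v, 1 ≤ k ∧
    (l = k :: (k + 1) :: k :: v ∨ l = (k + 1) :: k :: (k + 1) :: v) := by
  constructor
  · intro h
    match l, h with
    | a :: b :: c :: v, h =>
      simp only [isYB, Bool.or_eq_true, Bool.and_eq_true, bne_iff_ne, beq_iff_eq] at h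
      rcases h with ⟨⟨h1, rfl⟩, rfl⟩ | ⟨⟨h1, rfl⟩, rfl⟩
      · exact ⟨c, v, by omega, Or.inl rfl⟩
      · exact ⟨b, v, by omega, Or.inr rfl⟩
  · rintro ⟨k, v, hk, rfl | rfl⟩
    · simp [isYB]; omega
    · simp [isYB]; omega

lemma rotate_mem {n : ℕ} {l : List ℕ} (h : l ∈ RSet n (w0B n)) (j : ℕ) (hj : j ≤ l.length) :
    l.rotate j ∈ RSet n (w0B n) := by
  rw [mem_RSet (sgnPerm_w0B n)] at h ⊢
  obtain ⟨h1, h2, h3⟩ := h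
  refine ⟨fun i hi => h1 i (by simpa using hi), ?_, by simpa using h3⟩
  rw [List.rotate_eq_drop_append_take hj, wordProd_append]
  rw [← List.take_append_drop j l, wordProd_append] at h2
  have hs : SgnPerm n (wordProd (l.take j)) :=
    sgnPerm_wordProd fun i hi => h1 i (List.mem_of_mem_take hi)
  have hc := w0B_comm hs
  rw [← h2] at hc ⊢
  rw [mul_assoc] at hc
  exact (mul_left_cancel hc).symm

lemma mem_RSet_triple {n k : ℕ} (hk : 1 ≤ k) (hkn : k + 2 ≤ n) {w u : Equiv.Perm ℤ}
    (h : ∀ i : ℤ, w i = wkFun n k i) {a b c : ℕ} (hu : sB a * sB b * sB c = u)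
    (hu' : u = sB k * sB (k + 1) * sB k) (ha : a < n) (hb : b < n) (hc : c < n) (v : List ℕ) :
    a :: b :: c :: v ∈ RSet n (w0B n) ↔ v ∈ RSet n w := by
  have e := Wk_eq hk hkn h
  have s1 : SgnPerm n (sB k) := sgnPerm_sB (by omega)
  have s2 : SgnPerm n (sB (k + 1)) := sgnPerm_sB (by omega)
  have s0 := sgnPerm_w0B n
  have sw : SgnPerm n w := by
    rw [e]; exact ((s0.mul s1).mul s2).mul s1
  have sU : SgnPerm n u := by
    rw [hu']; exact (s1.mul s2).mul s1
  have hi := inv_Wk hk hkn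
  rw [← e] at hi
  have huu : u * u = 1 := by
    have e1 := sB_mul_self k
    have e2 := sB_mul_self (k + 1)
    rw [hu']
    calc sB k * sB (k + 1) * sB k * (sB k * sB (k + 1) * sB k)
        = sB k * sB (k + 1) * (sB k * sB k) * sB (k + 1) * sB k := by simp only [mul_assoc]
      _ = sB k * (sB (k + 1) * sB (k + 1)) * sB k := by rw [e1]; simp only [mul_assoc, one_mul]
      _ = 1 := by rw [e2, mul_one, e1]
  have ew : w = u * w0B n := by
    rw [w0B_comm sU, e, hu']; simp only [mul_assoc]
  have hp : wordProd (a :: b :: c :: v) = u * wordProd v := by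
    simp only [wordProd_cons, ← hu, mul_assoc]
  rw [mem_RSet s0, mem_RSet sw, inv_w0B, hp]
  refine and_congr ?_ (and_congr ?_ ?_)
  · simp only [List.mem_cons, forall_eq_or_imp, ha, hb, hc, true_and]
  · rw [ew]
    constructor
    · intro h'; rw [← h', ← mul_assoc, huu, one_mul]
    · intro h'; rw [h', ← mul_assoc, huu, one_mul]
  · simp only [List.length_cons]; omega

/-- For every `n ≥ 3`, with `W k = w_k ∈ Bₙ` for `1 ≤ k ≤ n - 2`,
`Σ_{ω ∈ R(w₀ᴮ)} yb(ω) = 2(n² - 2) · Σ_{k=1}^{n-2} |R(w_k)|`. -/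
theorem sum_yb_eq (n : ℕ) (hn : 3 ≤ n) (W : ℕ → Equiv.Perm ℤ)
    (hW : ∀ k, 1 ≤ k → k ≤ n - 2 → ∀ i : ℤ, W k i = wkFun n k i) :
    ∑ᶠ ω ∈ RSet n (w0B n), ybCount ω
      = 2 * (n ^ 2 - 2) * ∑ k ∈ Finset.Icc 1 (n - 2), Nat.card ↥(RSet n (W k)) := by
  classical
  have s0 := sgnPerm_w0B n
  set A := (RSet_finite s0).toFinset with hA
  have memA : ∀ l, l ∈ A ↔ l ∈ RSet n (w0B n) := fun l => Set.Finite.mem_toFinset _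
  have lenA : ∀ l ∈ A, l.length = n ^ 2 := by
    intro l hl
    rw [memA, mem_RSet s0, inv_w0B] at hl
    exact hl.2.2
  have hn2 : 9 ≤ n ^ 2 := by nlinarith
  obtain ⟨m, hm⟩ : ∃ m, n ^ 2 = m + 2 := ⟨n ^ 2 - 2, by omega⟩
  rw [finsum_mem_eq_finite_toFinset_sum _ (RSet_finite s0), ← hA]
  have h1 : ∑ l ∈ A, ybCount l
      = ∑ j ∈ Finset.range (n ^ 2), (A.filter fun l => isYB (l.drop j) = true).card := by
    simp only [Finset.card_filter]
    rw [Finset.sum_comm]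
    refine Finset.sum_congr rfl fun l hl => ?_
    rw [ybCount, Finset.card_filter, lenA l hl]
  have h2 : ∀ j ∈ Finset.range m, (A.filter fun l => isYB (l.drop j) = true).card
      = (A.filter fun l => isYB l = true).card := by
    intro j hj
    rw [Finset.mem_range] at hj
    have hrot : ∀ l ∈ A, ∀ i ≤ n ^ 2, l.rotate i ∈ A := by
      intro l hl i hi
      rw [memA]
      exact rotate_mem ((memA l).1 hl) i (by rw [lenA l hl]; exact hi)
    have r1 : ∀ l ∈ A, (l.rotate j).rotate (n ^ 2 - j) = l := by
      intro l hl
      rw [List.rotate_rotate, show j + (n ^ 2 - j) = l.length by rw [lenA l hl]; omega,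
        List.rotate_length]
    have r2 : ∀ l ∈ A, (l.rotate (n ^ 2 - j)).rotate j = l := by
      intro l hl
      rw [List.rotate_rotate, show (n ^ 2 - j) + j = l.length by rw [lenA l hl]; omega,
        List.rotate_length]
    refine Finset.card_nbij' (fun l => l.rotate j) (fun l => l.rotate (n ^ 2 - j)) ?_ ?_ ?_ ?_
    · intro l hl
      simp only [Finset.coe_filter, Set.mem_ofPred_eq] at hl ⊢
      refine ⟨hrot l hl.1 j (by omega), ?_⟩
      rw [isYB_rotate l j (by rw [lenA l hl.1]; omega)]
      exact hl.2
    · intro l hl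
      simp only [Finset.coe_filter, Set.mem_ofPred_eq] at hl ⊢
      have hA' := hrot l hl.1 (n ^ 2 - j) (by omega)
      refine ⟨hA', ?_⟩
      rw [← isYB_rotate _ j (by rw [lenA _ hA']; omega), r2 l hl.1]
      exact hl.2
    · intro l hl
      simp only [Finset.coe_filter, Set.mem_ofPred_eq] at hl
      exact r1 l hl.1
    · intro l hl
      simp only [Finset.coe_filter, Set.mem_ofPred_eq] at hl
      exact r2 l hl.1
  have h3 : ∀ j, m ≤ j → (A.filter fun l => isYB (l.drop j) = true).card = 0 := by
    intro j hj
    rw [Finset.card_eq_zero, Finset.filter_eq_empty_iff]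
    intro l hl
    rw [isYB_short]
    · simp
    · rw [List.length_drop, lenA l hl]; omega
  have h4 : (A.filter fun l => isYB l = true).card
      = ∑ k ∈ Finset.Icc 1 (n - 2), 2 * Nat.card ↥(RSet n (W k)) := by
    have hlt : ∀ l ∈ A, ∀ i ∈ l, i < n := by
      intro l hl
      rw [memA] at hl
      exact hl.1
    rw [Finset.card_eq_sum_card_fiberwise (f := fun l => min (l.getD 0 0) (l.getD 1 0))
      (t := Finset.Icc 1 (n - 2))]
    · refine Finset.sum_congr rfl fun k hk => ?_
      rw [Finset.mem_Icc] at hk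
      have hkn : k + 2 ≤ n := by omega
      have sw : SgnPerm n (W k) := by
        rw [Wk_eq hk.1 hkn (hW k hk.1 hk.2)]
        have s1 : SgnPerm n (sB k) := sgnPerm_sB (by omega)
        have s2 : SgnPerm n (sB (k + 1)) := sgnPerm_sB (by omega)
        exact ((s0.mul s1).mul s2).mul s1
      have t1 : ∀ v, k :: (k + 1) :: k :: v ∈ RSet n (w0B n) ↔ v ∈ RSet n (W k) :=
        mem_RSet_triple hk.1 hkn (hW k hk.1 hk.2) rfl rfl (by omega) (by omega) (by omega)
      have t2 : ∀ v, (k + 1) :: k :: (k + 1) :: v ∈ RSet n (w0B n) ↔ v ∈ RSet n (W k) :=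
        mem_RSet_triple hk.1 hkn (hW k hk.1 hk.2) rfl (braid hk.1).symm
          (by omega) (by omega) (by omega)
      have hR : Nat.card ↥(RSet n (W k)) = (RSet_finite sw).toFinset.card := by
        rw [Nat.card_coe_set_eq, Set.ncard_eq_toFinset_card _ (RSet_finite sw)]
      have hU : ((A.filter fun l => isYB l = true).filter
            fun l => min (l.getD 0 0) (l.getD 1 0) = k)
          = (RSet_finite sw).toFinset.image (fun v => k :: (k + 1) :: k :: v) ∪
            (RSet_finite sw).toFinset.image (fun v => (k + 1) :: k :: (k + 1) :: v) := by
        ext l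
        simp only [Finset.mem_filter, Finset.mem_union, Finset.mem_image,
          Set.Finite.mem_toFinset, memA, isYB_iff]
        constructor
        · rintro ⟨⟨hl, k', v, hk', rfl | rfl⟩, hmin⟩
          · have : k' = k := by simpa using hmin
            subst this
            exact Or.inl ⟨v, (t1 v).1 hl, rfl⟩
          · have : k' = k := by simpa using hmin
            subst this
            exact Or.inr ⟨v, (t2 v).1 hl, rfl⟩
        · rintro (⟨v, hv, rfl⟩ | ⟨v, hv, rfl⟩)
          · exact ⟨⟨(t1 v).2 hv, k, v, hk.1, Or.inl rfl⟩, by simp⟩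
          · exact ⟨⟨(t2 v).2 hv, k, v, hk.1, Or.inr rfl⟩, by simp⟩
      rw [hU, Finset.card_union_of_disjoint, Finset.card_image_of_injective,
        Finset.card_image_of_injective, hR, two_mul]
      · intro x y hxy; simpa using hxy
      · intro x y hxy; simpa using hxy
      · rw [Finset.disjoint_left]
        intro l hl hl'
        simp only [Finset.mem_image] at hl hl'
        obtain ⟨v, _, rfl⟩ := hl
        obtain ⟨v', _, h'⟩ := hl'
        simp at h'
    · intro l hl
      simp only [Finset.coe_filter, Set.mem_ofPred_eq, isYB_iff] at hl
      obtain ⟨hl, k, v, hk, rfl | rfl⟩ := hl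
      · have := hlt _ hl (k + 1) (by simp)
        simp
        omega
      · have := hlt _ hl (k + 1) (by simp)
        simp
        omega
  rw [h1, hm, Finset.sum_range_succ, Finset.sum_range_succ, h3 m le_rfl, h3 (m + 1) (by omega),
    Finset.sum_congr rfl h2, h4, Finset.sum_const, Finset.card_range, ← Finset.mul_sum]
  simp only [smul_eq_mul, add_zero, Nat.add_sub_cancel]
  ring
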